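/- arXiv:1607.05702 — 7 statements merged into one kernel-verified Lean document; each statement's English description precedes it below -/
import Mathlib

section
/- Let m, m' ≥ 1, let a : Fin m → ℝ and b : Fin m' → ℝ with a i > 0 for all i, P := Σ_i a i = Σ_j b j, and let p : Fin m → Fin m' → ℝ satisfy: (1) Σ_j p i j = a i for every i; (2) Σ_i p i j = b j for every j; and (3) p 0 j * a i = p i j * a 0 for all i and j (the partial-independence ratio equations). Then p i j = a i * b j / P for all i ∈ Fin m and j ∈ Fin m'; i.e., the system determined by the marginal equations together with the partial independence assumption has the unique solution P(D_i ∧ D'_j) = P(D_i)·P(D'_j)/P. -/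
/-- Uniqueness: if `a i > 0` for all `i`, `P = Σ_i a i = Σ_j b j`, and `p` satisfies
the marginal equations together with the partial-independence ratio equations
`p 0 j * a i = p i j * a 0`, then `p i j = a i * b j / P` for all `i, j`. -/
theorem system_has_unique_product_solution
    {m m' : ℕ} (hm : 1 ≤ m) (hm' : 1 ≤ m')
    (a : Fin m → ℝ) (b : Fin m' → ℝ) (P : ℝ)
    (ha : ∀ i, 0 < a i)
    (hPa : P = ∑ i, a i) (hPb : P = ∑ j, b j)
    (p : Fin m → Fin m' → ℝ)
    (hrow : ∀ i : Fin m, ∑ j, p i j = a i)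
    (hcol : ∀ j : Fin m', ∑ i, p i j = b j)
    (hratio : ∀ i : Fin m, ∀ j : Fin m', p ⟨0, hm⟩ j * a i = p i j * a ⟨0, hm⟩) :
    ∀ i : Fin m, ∀ j : Fin m', p i j = a i * b j / P := by
  intro i j
  have h0 := ha ⟨0, hm⟩
  have hP : 0 < P := by
    rw [hPa]
    exact Finset.sum_pos (fun i _ => ha i) ⟨⟨0, hm⟩, Finset.mem_univ _⟩
  -- Summing the ratio equations over `i` determines row `0` from the column sums.
  have hsum : p ⟨0, hm⟩ j * P = b j * a ⟨0, hm⟩ := by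
    rw [hPa, ← hcol j, Finset.mul_sum, Finset.sum_mul]
    exact Finset.sum_congr rfl fun i _ => hratio i j
  rw [eq_div_iff hP.ne']
  apply mul_right_cancel₀ h0.ne'
  linear_combination (-P) * hratio i j + a i * hsum
end

section
/- Let r and s be pr-relations whose formulas depend only on disjoint variable sets V and W respectively, and let q = r ⊎ s be their integration. Then PW(q) = { A ∪ B | A ∈ PW(r), B ∈ PW(s), and A and B are compatible }; that is, the possible worlds of the integrated epr-relation are exactly the unions of compatible pairs of possible worlds of the two sources. -/
/-!
Fix one assignment `μ`. Since tuples carry unique formulas, `μ` is valid for `r ⊎ s` exactly when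
the worlds `r_μ` and `s_μ` are compatible (`validInteg_iff_compatible`), and in that case the world
of the integration is `r_μ ∪ s_μ` (`world_integ`). So `PW(r ⊎ s)` consists of the unions of
compatible pairs of worlds that come from the same assignment. An arbitrary pair
`r_μ`, `s_ν` does come from a single assignment, namely the one equal to `μ` on `V` and to `ν`
elsewhere: a world depends only on the variables of its formulas (`world_congr`), and `V`, `W`
are disjoint.
-/

open scoped Classical

variable {Var Tup : Type*}

/-- A pr-relation is functional: each tuple occurs in at most one tuple–formula pair. -/
def Functional (r : Set (Tup × ((Var → Bool) → Bool))) : Prop :=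
  ∀ t (f g : (Var → Bool) → Bool), (t, f) ∈ r → (t, g) ∈ r → f = g

/-- The tuple set `T(r)` of a pr-relation: the set of first components. -/
def tupleSet (r : Set (Tup × ((Var → Bool) → Bool))) : Set Tup :=
  Prod.fst '' r

/-- The possible world `r_μ` of a pr-relation under an assignment `μ`. -/
def world (r : Set (Tup × ((Var → Bool) → Bool))) (μ : Var → Bool) : Set Tup :=
  { t | ∃ f : (Var → Bool) → Bool, (t, f) ∈ r ∧ f μ = true }

/-- The possible worlds `PW(r)` of a pr-relation. -/
def PW (r : Set (Tup × ((Var → Bool) → Bool))) : Set (Set Tup) :=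
  { A | ∃ μ : Var → Bool, A = world r μ }

/-- `A ⊆ T` and `B ⊆ T'` are compatible if `A ∩ (T ∩ T') = B ∩ (T ∩ T')`. -/
def Compatible (T T' A B : Set Tup) : Prop :=
  A ∩ (T ∩ T') = B ∩ (T ∩ T')

/-- A formula depends only on the variables in `V`. -/
def DependsOnly (f : (Var → Bool) → Bool) (V : Set Var) : Prop :=
  ∀ μ μ' : Var → Bool, (∀ v ∈ V, μ v = μ' v) → f μ = f μ'

/-- The tuple–formula pairs of the integration `q = r ⊎ s`: pairs of `r`, together with
the pairs of `s` whose tuple is not a tuple of `r` (for common tuples the formula is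
taken from `r`). -/
def integ (r s : Set (Tup × ((Var → Bool) → Bool))) :
    Set (Tup × ((Var → Bool) → Bool)) :=
  r ∪ { p | p ∈ s ∧ p.1 ∉ tupleSet r }

/-- The event constraints of the integration `q = r ⊎ s`: the pairs `(f_t, g_t)` for
each common tuple `t`, where `f_t` and `g_t` are the formulas of `t` in `r` and `s`. -/
def integConstraints (r s : Set (Tup × ((Var → Bool) → Bool))) :
    Set (((Var → Bool) → Bool) × ((Var → Bool) → Bool)) :=
  { fg | ∃ t : Tup, (t, fg.1) ∈ r ∧ (t, fg.2) ∈ s }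

/-- An assignment is valid for the integration `r ⊎ s` if it satisfies every event
constraint `f_t ≡ g_t` coming from a common tuple `t`. -/
def ValidInteg (r s : Set (Tup × ((Var → Bool) → Bool))) (μ : Var → Bool) : Prop :=
  ∀ t (f g : (Var → Bool) → Bool), (t, f) ∈ r → (t, g) ∈ s → f μ = g μ

/-- The possible worlds of the integration `r ⊎ s` (over valid assignments). -/
def PWinteg (r s : Set (Tup × ((Var → Bool) → Bool))) : Set (Set Tup) :=
  { A | ∃ μ : Var → Bool, ValidInteg r s μ ∧ A = world (integ r s) μ }

/-- An assignment is valid for a set of event constraints. -/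
def ValidEpr (C : Set (((Var → Bool) → Bool) × ((Var → Bool) → Bool)))
    (μ : Var → Bool) : Prop :=
  ∀ f g : (Var → Bool) → Bool, (f, g) ∈ C → f μ = g μ

/-- The possible worlds of an epr-relation `q` with event constraints `C`. -/
def PWepr (q : Set (Tup × ((Var → Bool) → Bool)))
    (C : Set (((Var → Bool) → Bool) × ((Var → Bool) → Bool))) : Set (Set Tup) :=
  { A | ∃ μ : Var → Bool, ValidEpr C μ ∧ A = world q μ }

/-- The event-variable formula `φ^r_A` of a relation `A ⊆ T(r)`:
`φ^r_A μ = true` iff `f μ = true` for every `(t, f) ∈ r` with `t ∈ A` and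
`f μ = false` for every `(t, f) ∈ r` with `t ∉ A`. -/
noncomputable def evf (r : Set (Tup × ((Var → Bool) → Bool))) (A : Set Tup) :
    (Var → Bool) → Bool :=
  fun μ => decide (∀ (t : Tup) (f : (Var → Bool) → Bool), (t, f) ∈ r → (f μ = true ↔ t ∈ A))

/-- The event-variable formula `Ξ^q_A` of `A ⊆ T(q)` for an epr-relation `q` with
event constraints `C` (conjoining all event constraints). -/
noncomputable def eevf (q : Set (Tup × ((Var → Bool) → Bool)))
    (C : Set (((Var → Bool) → Bool) × ((Var → Bool) → Bool))) (A : Set Tup) :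
    (Var → Bool) → Bool :=
  fun μ => decide (ValidEpr C μ ∧
    ∀ (t : Tup) (h : (Var → Bool) → Bool), (t, h) ∈ q → (h μ = true ↔ t ∈ A))

theorem mem_world_iff {r : Set (Tup × ((Var → Bool) → Bool))} (hr : Functional r)
    {t : Tup} {f : (Var → Bool) → Bool} (h : (t, f) ∈ r) (μ : Var → Bool) :
    t ∈ world r μ ↔ f μ = true := by
  constructor
  · rintro ⟨g, hg, hgμ⟩
    rwa [hr t f g h hg]
  · exact fun hf => ⟨f, h, hf⟩

theorem world_congr {r : Set (Tup × ((Var → Bool) → Bool))} {V : Set Var}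
    (hr : ∀ (t : Tup) (f : (Var → Bool) → Bool), (t, f) ∈ r → DependsOnly f V)
    {μ ν : Var → Bool} (h : ∀ v ∈ V, μ v = ν v) : world r μ = world r ν := by
  ext t
  refine exists_congr fun f => and_congr_right fun hf => ?_
  rw [hr t f hf μ ν h]

theorem validInteg_iff_compatible {r s : Set (Tup × ((Var → Bool) → Bool))}
    (hr : Functional r) (hs : Functional s) (μ : Var → Bool) :
    ValidInteg r s μ ↔
      Compatible (tupleSet r) (tupleSet s) (world r μ) (world s μ) := by
  constructor
  · intro hv
    ext t
    refine and_congr_left ?_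
    rintro ⟨⟨⟨t, f⟩, hf, rfl⟩, ⟨⟨_, g⟩, hg, rfl⟩⟩
    rw [mem_world_iff hr hf, mem_world_iff hs hg, hv _ f g hf hg]
  · intro hc t f g hf hg
    have ht : t ∈ tupleSet r ∩ tupleSet s := ⟨⟨_, hf, rfl⟩, ⟨_, hg, rfl⟩⟩
    have hiff : t ∈ world r μ ↔ t ∈ world s μ :=
      ⟨fun h => (hc.subset ⟨h, ht⟩).1, fun h => (hc.superset ⟨h, ht⟩).1⟩
    rw [mem_world_iff hr hf, mem_world_iff hs hg] at hiff
    exact Bool.eq_iff_iff.mpr hiff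

/-- Validity is what makes it harmless that `r ⊎ s` keeps only the formula from `r` for a
common tuple. -/
theorem world_integ {r s : Set (Tup × ((Var → Bool) → Bool))} {μ : Var → Bool}
    (hv : ValidInteg r s μ) : world (integ r s) μ = world r μ ∪ world s μ := by
  ext t
  constructor
  · rintro ⟨f, hf | hf, hfμ⟩
    · exact Or.inl ⟨f, hf, hfμ⟩
    · exact Or.inr ⟨f, hf.1, hfμ⟩
  · rintro (⟨f, hf, hfμ⟩ | ⟨g, hg, hgμ⟩)
    · exact ⟨f, Or.inl hf, hfμ⟩
    · by_cases ht : t ∈ tupleSet r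
      · obtain ⟨⟨_, f⟩, hf, rfl⟩ := ht
        exact ⟨f, Or.inl hf, (hv _ f g hf hg).trans hgμ⟩
      · exact ⟨g, Or.inr ⟨hg, ht⟩, hgμ⟩

/-- The possible worlds of the integrated epr-relation `q = r ⊎ s` are exactly the
unions of compatible pairs of possible worlds of the two sources. -/
theorem PW_integ_eq_unions_of_compatible_pairs
    (r s : Set (Tup × ((Var → Bool) → Bool))) (V W : Set Var)
    (hrFin : r.Finite) (hsFin : s.Finite)
    (hrFun : Functional r) (hsFun : Functional s)
    (hVW : V ∩ W = ∅)
    (hrV : ∀ (t : Tup) (f : (Var → Bool) → Bool), (t, f) ∈ r → DependsOnly f V)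
    (hsW : ∀ (t : Tup) (g : (Var → Bool) → Bool), (t, g) ∈ s → DependsOnly g W) :
    PWinteg r s =
      { C | ∃ A ∈ PW r, ∃ B ∈ PW s,
          Compatible (tupleSet r) (tupleSet s) A B ∧ C = A ∪ B } := by
  ext C
  constructor
  · rintro ⟨μ, hv, rfl⟩
    exact ⟨_, ⟨μ, rfl⟩, _, ⟨μ, rfl⟩, (validInteg_iff_compatible hrFun hsFun μ).mp hv,
      world_integ hv⟩
  · rintro ⟨_, ⟨μ, rfl⟩, _, ⟨ν, rfl⟩, hc, rfl⟩
    let ρ : Var → Bool := fun v => if v ∈ V then μ v else ν v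
    have hμ : world r μ = world r ρ := world_congr hrV fun v hv => (if_pos hv).symm
    have hν : world s ν = world s ρ := world_congr hsW fun v hv =>
      (if_neg fun hvV => (hVW.subset ⟨hvV, hv⟩ : v ∈ (∅ : Set Var))).symm
    rw [hμ, hν] at hc ⊢
    have hv := (validInteg_iff_compatible hrFun hsFun ρ).mpr hc
    exact ⟨ρ, hv, (world_integ hv).symm⟩
end

section
/- Let r and s be pr-relations whose formulas depend only on disjoint variable sets V and W respectively, let q = r ⊎ s be their integration, and let μ be an assignment that is valid for q (i.e., μ satisfies every event constraint f_t ≡ g_t of q). Then the possible worlds r_μ and s_μ are compatible, and q_μ = r_μ ∪ s_μ. -/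
/-!
On a common tuple, validity of `μ` says that the formulas from `r` and `s` take the same
value at `μ`, so the tuple lies in `r_μ` iff it lies in `s_μ`: this is compatibility.
The integration keeps every pair of `r` and discards from `s` only the pairs of common
tuples, which by the same remark contribute nothing beyond `r_μ`; hence `q_μ = r_μ ∪ s_μ`.
-/

open scoped Classical

variable {Var Tup : Type*}

/-- For an assignment `μ` valid for the integration `q = r ⊎ s`, the possible worlds
`r_μ` and `s_μ` are compatible, and `q_μ = r_μ ∪ s_μ`. -/
theorem world_integ_of_valid
    (r s : Set (Tup × ((Var → Bool) → Bool))) (V W : Set Var)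
    (hrFin : r.Finite) (hsFin : s.Finite)
    (hrFun : Functional r) (hsFun : Functional s)
    (hVW : V ∩ W = ∅)
    (hrV : ∀ (t : Tup) (f : (Var → Bool) → Bool), (t, f) ∈ r → DependsOnly f V)
    (hsW : ∀ (t : Tup) (g : (Var → Bool) → Bool), (t, g) ∈ s → DependsOnly g W)
    (μ : Var → Bool) (hμ : ValidInteg r s μ) :
    Compatible (tupleSet r) (tupleSet s) (world r μ) (world s μ) ∧
    world (integ r s) μ = world r μ ∪ world s μ := by
  constructor
  · ext t
    constructor
    · rintro ⟨⟨f, hf, hfμ⟩, hr, ⟨⟨_, g⟩, hg, rfl⟩⟩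
      exact ⟨⟨g, hg, (hμ _ f g hf hg).symm.trans hfμ⟩, hr, ⟨_, hg, rfl⟩⟩
    · rintro ⟨⟨g, hg, hgμ⟩, ⟨⟨_, f⟩, hf, rfl⟩, hs⟩
      exact ⟨⟨f, hf, (hμ _ f g hf hg).trans hgμ⟩, ⟨_, hf, rfl⟩, hs⟩
  · ext t
    constructor
    · rintro ⟨h, hr | ⟨hs, -⟩, hhμ⟩
      · exact Or.inl ⟨h, hr, hhμ⟩
      · exact Or.inr ⟨h, hs, hhμ⟩
    · rintro (⟨f, hf, hfμ⟩ | ⟨g, hg, hgμ⟩)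
      · exact ⟨f, Or.inl hf, hfμ⟩
      · by_cases ht : t ∈ tupleSet r
        -- `integ` drops the pair `(t, g)` of a common tuple; validity lets the formula
        -- of `t` in `r` witness membership instead.
        · obtain ⟨⟨_, f⟩, hf, rfl⟩ := ht
          exact ⟨f, Or.inl hf, (hμ _ f g hf hg).trans hgμ⟩
        · exact ⟨g, Or.inr ⟨hg, ht⟩, hgμ⟩
end

section
/- (Theorem.) Let r and s be pr-relations whose formulas depend only on disjoint variable sets V and W respectively, let q = r ⊎ s, let A ∈ PW(r) and B ∈ PW(s) be compatible, with event-variable formulas φ^r_A and ψ^s_B, and let ξ := φ^r_A ∧ ψ^s_B. Then ξ is the event-variable formula of the possible world A ∪ B of the epr-relation q: for every assignment μ, ξ μ = true if and only if μ is valid for q and q_μ = A ∪ B; equivalently, ξ is logically equivalent to Ξ^q_{A ∪ B}. -/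
/-!
By compatibility, and because `A ⊆ T(r)` and `B ⊆ T(s)`, a tuple of `r` lies in `A ∪ B` iff it
lies in `A`, and a tuple of `s` lies in `A ∪ B` iff it lies in `B` (`Compatible.mem_union_iff`).
Hence `φ^r_A ∧ ψ^s_B` says that the formula of every pair in `r` or `s` is true exactly when its
tuple is in `A ∪ B`. On a common tuple this forces both formulas to agree, which is the event
constraint; conversely the event constraints recover the formulas of `s` that the integration
drops on common tuples (`evf_conj_iff`). Since the integration is functional, the pointwise
condition over its pairs is the same as `q_μ = A ∪ B` (`world_eq_iff`).
-/

open scoped Classical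

variable {Var Tup : Type*}

lemma mem_tupleSet {q : Set (Tup × ((Var → Bool) → Bool))} {t : Tup}
    {f : (Var → Bool) → Bool} (h : (t, f) ∈ q) : t ∈ tupleSet q :=
  ⟨(t, f), h, rfl⟩

lemma subset_tupleSet_of_mem_PW {r : Set (Tup × ((Var → Bool) → Bool))} {A : Set Tup}
    (hA : A ∈ PW r) : A ⊆ tupleSet r := by
  obtain ⟨μ, rfl⟩ := hA
  rintro t ⟨f, hf, -⟩
  exact mem_tupleSet hf

lemma Functional.integ {r s : Set (Tup × ((Var → Bool) → Bool))}
    (hr : Functional r) (hs : Functional s) : Functional (integ r s) := by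
  rintro t f g (hf | ⟨hf, hf'⟩) (hg | ⟨hg, hg'⟩)
  · exact hr t f g hf hg
  · exact absurd (mem_tupleSet hf) hg'
  · exact absurd (mem_tupleSet hg) hf'
  · exact hs t f g hf hg

lemma union_subset_tupleSet_integ {r s : Set (Tup × ((Var → Bool) → Bool))} {A B : Set Tup}
    (hA : A ⊆ tupleSet r) (hB : B ⊆ tupleSet s) : A ∪ B ⊆ tupleSet (integ r s) := by
  intro t ht
  by_cases htr : t ∈ tupleSet r
  · obtain ⟨p, hp, rfl⟩ := htr
    exact ⟨p, Or.inl hp, rfl⟩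
  · obtain ⟨p, hp, rfl⟩ := hB (ht.resolve_left fun h => htr (hA h))
    exact ⟨p, Or.inr ⟨hp, htr⟩, rfl⟩

/-- The event-variable formula of `A` holds exactly at the assignments whose world is `A`. The
inclusion `A ⊆ T(q)` is needed because the right-hand side says nothing about tuples outside
`T(q)`. -/
lemma world_eq_iff {q : Set (Tup × ((Var → Bool) → Bool))} (hq : Functional q) {A : Set Tup}
    (hA : A ⊆ tupleSet q) (μ : Var → Bool) :
    world q μ = A ↔
      ∀ (t : Tup) (f : (Var → Bool) → Bool), (t, f) ∈ q → (f μ = true ↔ t ∈ A) := by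
  constructor
  · rintro rfl t f hf
    refine ⟨fun h => ⟨f, hf, h⟩, ?_⟩
    rintro ⟨g, hg, h⟩
    rwa [hq t f g hf hg]
  · intro H
    ext t
    constructor
    · rintro ⟨f, hf, h⟩
      exact (H t f hf).1 h
    · intro ht
      obtain ⟨⟨t, f⟩, hf, rfl⟩ := hA ht
      exact ⟨f, hf, (H t f hf).2 ht⟩

lemma Compatible.symm {T T' A B : Set Tup} (h : Compatible T T' A B) : Compatible T' T B A := by
  unfold Compatible at h ⊢
  rw [Set.inter_comm T' T]
  exact Eq.symm h

/-- On `T`, the union of compatible sets adds nothing to `A`: a tuple of `B` in `T` is common,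
hence in `A`. -/
lemma Compatible.mem_union_iff {T T' A B : Set Tup} (h : Compatible T T' A B) (hB : B ⊆ T')
    {t : Tup} (ht : t ∈ T) : t ∈ A ∪ B ↔ t ∈ A := by
  refine ⟨fun hAB => hAB.elim id fun htB => ?_, Or.inl⟩
  have hmem : t ∈ B ∩ (T ∩ T') := ⟨htB, ht, hB htB⟩
  rw [← show A ∩ (T ∩ T') = B ∩ (T ∩ T') from h] at hmem
  exact hmem.1

lemma validEpr_integConstraints_iff (r s : Set (Tup × ((Var → Bool) → Bool)))
    (μ : Var → Bool) : ValidEpr (integConstraints r s) μ ↔ ValidInteg r s μ :=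
  ⟨fun h t f g hf hg => h f g ⟨t, hf, hg⟩, fun h f g ⟨t, hf, hg⟩ => h t f g hf hg⟩

/-- The conjunction of the two event-variable formulas, unfolded over the pairs and event
constraints of the integration. -/
lemma evf_conj_iff {r s : Set (Tup × ((Var → Bool) → Bool))} {A B : Set Tup}
    (hA : A ⊆ tupleSet r) (hB : B ⊆ tupleSet s)
    (hcomp : Compatible (tupleSet r) (tupleSet s) A B) (μ : Var → Bool) :
    (evf r A μ && evf s B μ) = true ↔
      ValidInteg r s μ ∧ ∀ (t : Tup) (h : (Var → Bool) → Bool),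
        (t, h) ∈ integ r s → (h μ = true ↔ t ∈ A ∪ B) := by
  have hrU {t f} (hf : (t, f) ∈ r) : t ∈ A ∪ B ↔ t ∈ A :=
    hcomp.mem_union_iff hB (mem_tupleSet hf)
  have hsU {t g} (hg : (t, g) ∈ s) : t ∈ A ∪ B ↔ t ∈ B := by
    rw [Set.union_comm]
    exact hcomp.symm.mem_union_iff hA (mem_tupleSet hg)
  simp only [evf, Bool.and_eq_true, decide_eq_true_eq]
  constructor
  · rintro ⟨hr, hs⟩
    refine ⟨fun t f g hf hg => ?_, ?_⟩
    · rw [Bool.eq_iff_iff, hr t f hf, hs t g hg, ← hrU hf, ← hsU hg]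
    · rintro t h (hf | ⟨hg, -⟩)
      · rw [hr t h hf, hrU hf]
      · rw [hs t h hg, hsU hg]
  · rintro ⟨hval, H⟩
    refine ⟨fun t f hf => ?_, fun t g hg => ?_⟩
    · rw [H t f (Or.inl hf), hrU hf]
    · rw [← hsU hg]
      by_cases htr : t ∈ tupleSet r
      · obtain ⟨⟨t, f⟩, hf, rfl⟩ := htr
        -- The pair `(t, g)` is absent from the integration; its event constraint supplies `g μ`.
        rw [← hval t f g hf hg]
        exact H t f (Or.inl hf)
      · exact H t g (Or.inr ⟨hg, htr⟩)

/-- Theorem: for compatible `A ∈ PW(r)` and `B ∈ PW(s)`, the conjunction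
`ξ = φ^r_A ∧ ψ^s_B` is the event-variable formula of the possible world `A ∪ B` of the
epr-relation `q = r ⊎ s`: `ξ μ = true` iff `μ` is valid for `q` and `q_μ = A ∪ B`;
equivalently, `ξ` is logically equivalent to `Ξ^q_{A ∪ B}`. -/
theorem evf_conj_is_evf_of_union
    (r s : Set (Tup × ((Var → Bool) → Bool))) (V W : Set Var)
    (hrFin : r.Finite) (hsFin : s.Finite)
    (hrFun : Functional r) (hsFun : Functional s)
    (hVW : V ∩ W = ∅)
    (hrV : ∀ (t : Tup) (f : (Var → Bool) → Bool), (t, f) ∈ r → DependsOnly f V)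
    (hsW : ∀ (t : Tup) (g : (Var → Bool) → Bool), (t, g) ∈ s → DependsOnly g W)
    (A B : Set Tup) (hAPW : A ∈ PW r) (hBPW : B ∈ PW s)
    (hcomp : Compatible (tupleSet r) (tupleSet s) A B) :
    (∀ μ : Var → Bool,
      (evf r A μ && evf s B μ) = true ↔
        (ValidInteg r s μ ∧ world (integ r s) μ = A ∪ B)) ∧
    (∀ μ : Var → Bool,
      (evf r A μ && evf s B μ) = eevf (integ r s) (integConstraints r s) (A ∪ B) μ) := by
  have hA := subset_tupleSet_of_mem_PW hAPW
  have hB := subset_tupleSet_of_mem_PW hBPW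
  refine ⟨fun μ => ?_, fun μ => ?_⟩
  · rw [evf_conj_iff hA hB hcomp,
      world_eq_iff (hrFun.integ hsFun) (union_subset_tupleSet_integ hA hB)]
  · rw [Bool.eq_iff_iff, evf_conj_iff hA hB hcomp, eevf, decide_eq_true_eq,
      validEpr_integConstraints_iff]
end

section
/- (Single-tuple transformation, case v ∈ q_{ij}.) Let r and s be pr-relations, let (v, h) ∈ r with v ∉ T(s), and set r' := r \ {(v, h)} and s' := s ∪ {(v, h)}. Let A ⊆ T(r) with v ∈ A and B ⊆ T(s). Then for every assignment μ: φ^r_A μ = φ^{r'}_{A \ {v}} μ ∧ h μ, ψ^{s'}_{B ∪ {v}} μ = ψ^s_B μ ∧ h μ, and consequently φ^r_A μ ∧ ψ^s_B μ = φ^{r'}_{A \ {v}} μ ∧ ψ^{s'}_{B ∪ {v}} μ; i.e., the event-variable formulas φ^r_A ∧ ψ^s_B and φ^{r'}_{A \ {v}} ∧ ψ^{s'}_{B ∪ {v}} are logically equivalent. -/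
/-!
Everything follows from one fact, `evf_union_singleton`: adjoining a pair `(v, h)` with a fresh
tuple `v` to a relation, and `v` to the subset, multiplies the event-variable formula by `h`.
It applies to `s` directly, and to `r \ {(v, h)}` because functionality of `r` makes `v` fresh
there; the equivalence is then associativity and commutativity of conjunction.
-/

open scoped Classical

variable {Var Tup : Type*}

/-- Adjoining a pair `(v, h)` with a fresh tuple `v` to a pr-relation, and `v` to the chosen
subset, conjoins `h` to the event-variable formula. Freshness ensures that the conditions
coming from the old pairs are unaffected by adding `v` to `B`. -/
theorem evf_union_singleton (s : Set (Tup × ((Var → Bool) → Bool)))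
    (v : Tup) (h : (Var → Bool) → Bool) (hvs : v ∉ tupleSet s) (B : Set Tup)
    (μ : Var → Bool) :
    evf (s ∪ {(v, h)}) (B ∪ {v}) μ = (evf s B μ && h μ) := by
  have hne : ∀ t f, (t, f) ∈ s → t ≠ v := by
    rintro t f htf rfl
    exact hvs ⟨_, htf, rfl⟩
  rw [Bool.eq_iff_iff]
  simp only [evf, Bool.and_eq_true, decide_eq_true_eq, Set.mem_union, Set.mem_singleton_iff,
    Prod.mk.injEq]
  constructor
  · intro H
    refine ⟨fun t f htf => ?_, (H v h (Or.inr ⟨rfl, rfl⟩)).2 (Or.inr rfl)⟩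
    simpa [hne t f htf] using H t f (Or.inl htf)
  · rintro ⟨H, hh⟩ t f (htf | ⟨rfl, rfl⟩)
    · simpa [hne t f htf] using H t f htf
    · simp [hh]

/-- Single-tuple transformation, case `v ∈ q_{ij}`: with `r' = r \ {(v, h)}` and
`s' = s ∪ {(v, h)}`, for `A ⊆ T(r)` with `v ∈ A` and `B ⊆ T(s)`,
`φ^r_A μ = φ^{r'}_{A \ {v}} μ ∧ h μ`, `ψ^{s'}_{B ∪ {v}} μ = ψ^s_B μ ∧ h μ`, and hence
`φ^r_A ∧ ψ^s_B` and `φ^{r'}_{A \ {v}} ∧ ψ^{s'}_{B ∪ {v}}` are logically equivalent. -/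
theorem single_tuple_transformation_mem
    (r s : Set (Tup × ((Var → Bool) → Bool)))
    (hrFin : r.Finite) (hsFin : s.Finite)
    (hrFun : Functional r) (hsFun : Functional s)
    (v : Tup) (h : (Var → Bool) → Bool)
    (hvr : (v, h) ∈ r) (hvs : v ∉ tupleSet s)
    (A : Set Tup) (hA : A ⊆ tupleSet r) (hvA : v ∈ A)
    (B : Set Tup) (hB : B ⊆ tupleSet s)
    (μ : Var → Bool) :
    evf r A μ = (evf (r \ {(v, h)}) (A \ {v}) μ && h μ) ∧
    evf (s ∪ {(v, h)}) (B ∪ {v}) μ = (evf s B μ && h μ) ∧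
    (evf r A μ && evf s B μ) =
      (evf (r \ {(v, h)}) (A \ {v}) μ && evf (s ∪ {(v, h)}) (B ∪ {v}) μ) := by
  have hfresh : v ∉ tupleSet (r \ {(v, h)}) := by
    rintro ⟨⟨t, f⟩, ⟨htf, hne⟩, rfl⟩
    exact hne (by rw [hrFun t f h htf hvr]; rfl)
  have h₁ : evf r A μ = (evf (r \ {(v, h)}) (A \ {v}) μ && h μ) := by
    rw [← evf_union_singleton _ v h hfresh,
      Set.sdiff_union_of_subset (Set.singleton_subset_iff.2 hvr),
      Set.sdiff_union_of_subset (Set.singleton_subset_iff.2 hvA)]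
  have h₂ := evf_union_singleton s v h hvs B μ
  refine ⟨h₁, h₂, ?_⟩
  rw [h₁, h₂, Bool.and_assoc, Bool.and_comm (h μ)]
end

section
/- (Single-tuple transformation, case v ∉ q_{ij}.) Let r and s be pr-relations, let (v, h) ∈ r with v ∉ T(s), and set r' := r \ {(v, h)} and s' := s ∪ {(v, h)}. Let A ⊆ T(r) with v ∉ A and B ⊆ T(s). Then for every assignment μ: φ^r_A μ = φ^{r'}_A μ ∧ (¬ h μ), ψ^{s'}_B μ = ψ^s_B μ ∧ (¬ h μ), and consequently φ^r_A μ ∧ ψ^s_B μ = φ^{r'}_A μ ∧ ψ^{s'}_B μ; i.e., the event-variable formulas φ^r_A ∧ ψ^s_B and φ^{r'}_A ∧ ψ^{s'}_B are logically equivalent. -/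
/-!
A pair `(v, h)` contributes to the event-variable formula of a set `A` with `v ∉ A` exactly the
conjunct `¬ h` (`evf_union_singleton_of_notMem`). Since `v` lies in neither `A` nor `B`, moving the
pair from `r` to `s` moves this conjunct from `φ` to `ψ` and leaves their conjunction unchanged.
-/

open scoped Classical

variable {Var Tup : Type*}

/-- Adding a pair `(v, h)` with `v ∉ A` to a relation conjoins `¬ h` to the event-variable
formula of `A`. Both halves of the transformation are instances: the pair is added to `s`, and
`r` is recovered by adding it back to `r \ {(v, h)}`. -/
theorem evf_union_singleton_of_notMem (r : Set (Tup × ((Var → Bool) → Bool))) {v : Tup}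
    (h : (Var → Bool) → Bool) {A : Set Tup} (hvA : v ∉ A) (μ : Var → Bool) :
    evf (r ∪ {(v, h)}) A μ = (evf r A μ && !(h μ)) := by
  rw [Bool.eq_iff_iff]
  simp only [evf, decide_eq_true_eq, Bool.and_eq_true, Bool.not_eq_true', Set.mem_union,
    Set.mem_singleton_iff, Prod.mk.injEq]
  constructor
  · intro H
    refine ⟨fun t f hf => H t f (Or.inl hf), ?_⟩
    have := H v h (Or.inr ⟨rfl, rfl⟩)
    simpa [hvA] using this
  · rintro ⟨H, hh⟩ t f (hf | ⟨rfl, rfl⟩)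
    · exact H t f hf
    · simp [hh, hvA]

/-- Single-tuple transformation, case `v ∉ q_{ij}`: with `r' = r \ {(v, h)}` and
`s' = s ∪ {(v, h)}`, for `A ⊆ T(r)` with `v ∉ A` and `B ⊆ T(s)`,
`φ^r_A μ = φ^{r'}_A μ ∧ ¬ h μ`, `ψ^{s'}_B μ = ψ^s_B μ ∧ ¬ h μ`, and hence
`φ^r_A ∧ ψ^s_B` and `φ^{r'}_A ∧ ψ^{s'}_B` are logically equivalent. -/
theorem single_tuple_transformation_not_mem
    (r s : Set (Tup × ((Var → Bool) → Bool)))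
    (hrFin : r.Finite) (hsFin : s.Finite)
    (hrFun : Functional r) (hsFun : Functional s)
    (v : Tup) (h : (Var → Bool) → Bool)
    (hvr : (v, h) ∈ r) (hvs : v ∉ tupleSet s)
    (A : Set Tup) (hA : A ⊆ tupleSet r) (hvA : v ∉ A)
    (B : Set Tup) (hB : B ⊆ tupleSet s)
    (μ : Var → Bool) :
    evf r A μ = (evf (r \ {(v, h)}) A μ && !(h μ)) ∧
    evf (s ∪ {(v, h)}) B μ = (evf s B μ && !(h μ)) ∧
    (evf r A μ && evf s B μ) =
      (evf (r \ {(v, h)}) A μ && evf (s ∪ {(v, h)}) B μ) := by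
  have hr : evf r A μ = (evf (r \ {(v, h)}) A μ && !(h μ)) := by
    rw [← evf_union_singleton_of_notMem _ h hvA,
      Set.sdiff_union_of_subset (Set.singleton_subset_iff.mpr hvr)]
  have hs : evf (s ∪ {(v, h)}) B μ = (evf s B μ && !(h μ)) :=
    evf_union_singleton_of_notMem s h (fun hv => hvs (hB hv)) μ
  refine ⟨hr, hs, ?_⟩
  rw [hr, hs, Bool.and_assoc, Bool.and_comm (!(h μ))]
end

section
/- (Robustness theorem.) Let r and s be pr-relations, let (v, h) ∈ r with v ∉ T(s), and set r' := r \ {(v, h)} and s' := s ∪ {(v, h)} (a single-tuple transformation, so that T(r) ∪ T(s) = T(r') ∪ T(s')). Then for every A ⊆ T(r) and B ⊆ T(s) there exist A' ⊆ T(r') and B' ⊆ T(s') with A ∪ B = A' ∪ B' and such that the event-variable formulas φ^r_A ∧ ψ^s_B and φ^{r'}_{A'} ∧ ψ^{s'}_{B'} are logically equivalent (namely A' = A \ {v}, and B' = B ∪ {v} if v ∈ A, else B' = B). Hence the event-variable formulas obtained for the possible-world relations of the integration through the pair (r, s) are equivalent to those obtained through the pair (r', s'). -/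
/-!
Moving `(v, h)` from `r` to `s` merely moves one conjunct, `h μ = true ↔ v ∈ A`, from `φ^r_A`
to the other formula. With `A' = A \ {v}` and `B' = B ∪ (A ∩ {v})`, the membership of every
other tuple is unchanged, and `v ∈ B' ↔ v ∈ A` because `v ∉ T(s) ⊇ B`. Functionality of `r`
ensures that no further pair with tuple `v` is left in `r`, and `v ∉ T(s)` that no pair of `s`
is affected by adding `v` to `B`.
-/

open scoped Classical

variable {Var Tup : Type*}

/-- Robustness theorem: a single-tuple transformation `r' = r \ {(v, h)}`,
`s' = s ∪ {(v, h)}` preserves the overall tuple set, and for every `A ⊆ T(r)` and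
`B ⊆ T(s)` there are `A' ⊆ T(r')` and `B' ⊆ T(s')` with `A ∪ B = A' ∪ B'` such that the
event-variable formulas `φ^r_A ∧ ψ^s_B` and `φ^{r'}_{A'} ∧ ψ^{s'}_{B'}` are logically
equivalent.  Hence the event-variable formulas obtained for the possible-world relations
of the integration through `(r, s)` are equivalent to those obtained through
`(r', s')`. -/
theorem robustness_single_tuple_transformation
    (r s : Set (Tup × ((Var → Bool) → Bool)))
    (hrFin : r.Finite) (hsFin : s.Finite)
    (hrFun : Functional r) (hsFun : Functional s)
    (v : Tup) (h : (Var → Bool) → Bool)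
    (hvr : (v, h) ∈ r) (hvs : v ∉ tupleSet s) :
    tupleSet r ∪ tupleSet s = tupleSet (r \ {(v, h)}) ∪ tupleSet (s ∪ {(v, h)}) ∧
    ∀ A : Set Tup, A ⊆ tupleSet r → ∀ B : Set Tup, B ⊆ tupleSet s →
      ∃ A' : Set Tup, A' ⊆ tupleSet (r \ {(v, h)}) ∧
      ∃ B' : Set Tup, B' ⊆ tupleSet (s ∪ {(v, h)}) ∧
        A ∪ B = A' ∪ B' ∧
        ∀ μ : Var → Bool,
          (evf r A μ && evf s B μ) =
            (evf (r \ {(v, h)}) A' μ && evf (s ∪ {(v, h)}) B' μ) := by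
  -- No pair of `s` has tuple `v`, and `(v, h)` is the only such pair of `r`.
  have hs : ∀ f, (v, f) ∉ s := fun f hf => hvs ⟨(v, f), hf, rfl⟩
  have hr : ∀ f, (v, f) ∈ r → f = h := fun f hf => hrFun v f h hf hvr
  constructor
  · ext t
    simp only [tupleSet, Set.mem_union, Set.mem_image, Prod.exists, Set.mem_sdiff,
      Set.mem_singleton_iff, Prod.mk.injEq, exists_and_right, exists_eq_right]
    grind
  · intro A hA B hB
    have hvB : v ∉ B := fun hv => hvs (hB hv)
    -- `B ∪ (A ∩ {v})` is `B ∪ {v}` if `v ∈ A` and `B` otherwise.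
    refine ⟨A \ {v}, ?_, B ∪ (A ∩ {v}), ?_, ?_, ?_⟩
    · rintro t ⟨htA, htv⟩
      obtain ⟨p, hp, rfl⟩ := hA htA
      exact ⟨p, ⟨hp, fun hpv => htv (congrArg Prod.fst hpv)⟩, rfl⟩
    · rintro t (htB | ⟨-, rfl⟩)
      · obtain ⟨p, hp, rfl⟩ := hB htB
        exact ⟨p, Or.inl hp, rfl⟩
      · exact ⟨(t, h), Or.inr rfl, rfl⟩
    · ext t
      simp only [Set.mem_union, Set.mem_sdiff, Set.mem_inter_iff, Set.mem_singleton_iff]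
      tauto
    · intro μ
      rw [Bool.eq_iff_iff]
      simp only [evf, Bool.and_eq_true, decide_eq_true_eq, Set.mem_union, Set.mem_sdiff,
        Set.mem_inter_iff, Set.mem_singleton_iff, Prod.mk.injEq]
      constructor
      · rintro ⟨h1, h2⟩
        constructor <;> grind
      · rintro ⟨h1, h2⟩
        constructor
        · intro t f hf
          by_cases htv : t = v
          · subst htv
            obtain rfl := hr f hf
            simpa [hvB] using h2 t f (Or.inr ⟨rfl, rfl⟩)
          · simpa [htv] using h1 t f ⟨hf, fun hp => htv hp.1⟩
        · grind
end
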